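/- arXiv:math/0509548 — 3 statements merged into one kernel-verified Lean document; each statement's English description precedes it below -/
import Mathlib

section
/- For any words u, v, w over the index semigroup Ω, the coefficient of y_u ⊗ y_v in Δ_*(y_w) is nonzero if and only if w belongs to the contracting shuffle set csh(u,v), i.e., w can be obtained from an interleaving of u and v (preserving the internal order of each) by replacing, for some chosen set of pairs of adjacent letters with one letter coming from u and the other from v, each such pair by the sum of its two letters in Ω. -/
namespace Moulds

variable {X : Type*} {K : Type*}

/-- The multiset of shuffles (interleavings) of two words, counted with multiplicity. -/
def shuffles : List X → List X → Multiset (List X)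
  | [], v => {v}
  | a :: u, [] => {a :: u}
  | a :: u, b :: v =>
      (shuffles u (b :: v)).map (a :: ·) + (shuffles (a :: u) v).map (b :: ·)
termination_by u v => u.length + v.length

/-- The multiset of contracting shuffles of two words: interleavings in which any
pair of adjacent letters coming one from each word may be contracted to their sum. -/
def cshuffles [Add X] : List X → List X → Multiset (List X)
  | [], v => {v}
  | a :: u, [] => {a :: u}
  | a :: u, b :: v =>
      (cshuffles u (b :: v)).map (a :: ·) + (cshuffles (a :: u) v).map (b :: ·)
        + (cshuffles u v).map ((a + b) :: ·)
termination_by u v => u.length + v.length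

/-- Shuffle sum Σ_{w ∈ sh(u,v)} M^w (with multiplicity). -/
def shuffleSum [AddCommMonoid K] (M : List X → K) (u v : List X) : K :=
  ((shuffles u v).map M).sum

/-- Contracting shuffle sum Σ_{w ∈ csh(u,v)} M^w (with multiplicity). -/
def cshuffleSum [Add X] [AddCommMonoid K] (M : List X → K) (u v : List X) : K :=
  ((cshuffles u v).map M).sum

/-- A mould is alternal if it vanishes on ∅ and all its nontrivial shuffle sums vanish. -/
def Alternal [AddCommMonoid K] (M : List X → K) : Prop :=
  M [] = 0 ∧ ∀ u v : List X, u ≠ [] → v ≠ [] → shuffleSum M u v = 0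

/-- A mould is symétral if M^∅ = 1 and shuffle sums multiply. -/
def Symetral [CommRing K] (M : List X → K) : Prop :=
  M [] = 1 ∧ ∀ u v : List X, shuffleSum M u v = M u * M v

/-- A mould is alternel if it vanishes on ∅ and all its nontrivial contracting
shuffle sums vanish. -/
def Alternel [Add X] [AddCommMonoid K] (M : List X → K) : Prop :=
  M [] = 0 ∧ ∀ u v : List X, u ≠ [] → v ≠ [] → cshuffleSum M u v = 0

/-- A mould is symétrel if M^∅ = 1 and contracting shuffle sums multiply. -/
def Symetrel [Add X] [CommRing K] (M : List X → K) : Prop :=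
  M [] = 1 ∧ ∀ u v : List X, cshuffleSum M u v = M u * M v

/-- Mould multiplication: (M × N)^w = Σ_{w = w¹w²} M^{w¹} N^{w²}. -/
def mmul [CommRing K] (M N : List X → K) : List X → K :=
  fun w => ∑ i ∈ Finset.range (w.length + 1), M (w.take i) * N (w.drop i)

/-- The unit mould 1^•, equal to 1 on the empty word and 0 elsewhere. -/
def mone [One K] [Zero K] : List X → K :=
  fun w => match w with | [] => 1 | _ => 0

/-- The mould I^•, equal to 1 on one-letter words and 0 elsewhere. -/
def mId [One K] [Zero K] : List X → K :=
  fun w => if w.length = 1 then 1 else 0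

/-- All factorizations of a word into nonempty consecutive blocks; a block is
recorded as (first letter, rest of the block). -/
def splits : List X → List (List (X × List X))
  | [] => [[]]
  | a :: t =>
      (splits t).flatMap fun p =>
        match p with
        | [] => [[(a, ([] : List X))]]
        | (b, r) :: ps => [(a, b :: r) :: ps, (a, ([] : List X)) :: (b, r) :: ps]

/-- The sum ‖·‖ of the letters of a (nonempty) block. -/
def blockSum [Add X] (b : X × List X) : X := b.2.foldl (· + ·) b.1

/-- Mould composition:
(M ∘ N)^w = Σ_{w = w¹⋯wˢ, wⁱ ≠ ∅} M^{(‖w¹‖,…,‖wˢ‖)} N^{w¹} ⋯ N^{wˢ}. -/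
def mcomp [Add X] [CommRing K] (M N : List X → K) : List X → K :=
  fun w => ((splits w).map
    (fun p => M (p.map blockSum) * (p.map (fun b => N (b.1 :: b.2))).prod)).sum

/-- The monomial series associated to a word. -/
def mono [DecidableEq X] [One K] [Zero K] (w : List X) : List X → K :=
  fun w' => if w' = w then 1 else 0

end Moulds

namespace Moulds

/- STATEMENT 1: For the coproduct Δ_* on K⟨⟨Y⟩⟩ (Y indexed by a commutative semigroup Ω
in which every element has finitely many decompositions), characterized as a
multiplicative unital map sending each letter y_ω to
y_ω⊗1 + 1⊗y_ω + Σ_{α+β=ω} y_α⊗y_β, the coefficient of y_u ⊗ y_v in Δ_*(y_w) is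
nonzero iff w belongs to the contracting shuffle set csh(u,v). -/

variable {Ω : Type*} {K : Type*}

/-- Cauchy product on K⟨⟨Y⟩⟩, viewed on coefficients. -/
def sprod [CommRing K] (P Q : List Ω → K) : List Ω → K :=
  fun w => ∑ i ∈ Finset.range (w.length + 1), P (w.take i) * Q (w.drop i)

/-- Product on the (completed) tensor square of K⟨⟨Y⟩⟩, viewed on coefficients. -/
def tprod [CommRing K] (P Q : List Ω × List Ω → K) : List Ω × List Ω → K :=
  fun p => ∑ i ∈ Finset.range (p.1.length + 1), ∑ j ∈ Finset.range (p.2.length + 1),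
    P (p.1.take i, p.2.take j) * Q (p.1.drop i, p.2.drop j)

/-- The unit 1⊗1 of the tensor square. -/
def tone [CommRing K] : List Ω × List Ω → K := fun p => mone p.1 * mone p.2

/-! Sending a series `M` to the series whose coefficient at `u ⊗ v` is `Σ_{w ∈ csh(u,v)} M^w`
intertwines left multiplication by `y_ω` with left multiplication by the coproduct of `y_ω`: the
terms `y_ω ⊗ 1`, `1 ⊗ y_ω` and `y_α ⊗ y_β` peel off the first letter of `u`, of `v`, or of both,
just as the recursion for `csh(u,v)` does. Building `y_w` letter by letter, `Δ_*(y_w)` is the image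
of `y_w` under this map, so its coefficient at `u ⊗ v` is the multiplicity of `w` in `csh(u,v)`. -/

/-- The coproduct of the letter `y_ω`, namely `y_ω ⊗ 1 + 1 ⊗ y_ω + Σ_{α+β=ω} y_α ⊗ y_β`, given by
its coefficients `y_u ⊗ y_v ↦ letterCoproduct ω (u, v)`. -/
def letterCoproduct [Add Ω] [DecidableEq Ω] [Zero K] [One K] (ω : Ω) : List Ω × List Ω → K
  | ([], []) => 0
  | ([a], []) => if a = ω then 1 else 0
  | ([], [b]) => if b = ω then 1 else 0
  | ([a], [b]) => if a + b = ω then 1 else 0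
  | (_ :: _ :: _, _) => 0
  | (_, _ :: _ :: _) => 0

/-- The closed form of `Δ_*`, dual to the contracting shuffle product of words: the
coefficient of `y_u ⊗ y_v` in the image of `M` is the contracting shuffle sum of `M` over `u, v`. -/
def cshuffleCoproduct [Add Ω] [AddCommMonoid K] (M : List Ω → K) : List Ω × List Ω → K :=
  fun p => cshuffleSum M p.1 p.2

section CshuffleSum

variable [Add Ω]

theorem cshuffleSum_nil_left [AddCommMonoid K] (M : List Ω → K) (v : List Ω) :
    cshuffleSum M [] v = M v := by
  simp [cshuffleSum, cshuffles]

theorem cshuffleSum_nil_right [AddCommMonoid K] (M : List Ω → K) (u : List Ω) :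
    cshuffleSum M u [] = M u := by
  cases u <;> simp [cshuffleSum, cshuffles]

theorem cshuffleSum_cons_cons [AddCommMonoid K] (M : List Ω → K) (a b : Ω) (u v : List Ω) :
    cshuffleSum M (a :: u) (b :: v) =
      cshuffleSum (fun w => M (a :: w)) u (b :: v) + cshuffleSum (fun w => M (b :: w)) (a :: u) v +
        cshuffleSum (fun w => M ((a + b) :: w)) u v := by
  simp [cshuffleSum, cshuffles]

theorem cshuffleSum_zero [AddCommMonoid K] (u v : List Ω) :
    cshuffleSum (fun _ => (0 : K)) u v = 0 := by
  simp [cshuffleSum]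

theorem cshuffleSum_ite [AddCommMonoid K] (p : Prop) [Decidable p] (M : List Ω → K)
    (u v : List Ω) :
    cshuffleSum (fun w => if p then M w else 0) u v = if p then cshuffleSum M u v else 0 := by
  split_ifs
  · rfl
  · exact cshuffleSum_zero u v

theorem cshuffleSum_mono [DecidableEq Ω] [AddCommMonoidWithOne K] (u v w : List Ω) :
    cshuffleSum (mono w) u v = ((cshuffles u v).count w : K) := by
  have hmono_ne : ∀ w' ≠ w, w' ∈ cshuffles u v → (mono w w' : K) = 0 := fun _ hne _ => if_neg hne
  rw [cshuffleSum, Multiset.sum_map_eq_nsmul_single w hmono_ne, mono, if_pos rfl, nsmul_one]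

end CshuffleSum

theorem sum_take_drop_cons_of_cons_cons_eq_zero [AddCommMonoid K] (f : List Ω → List Ω → K)
    (hf : ∀ a b s t, f (a :: b :: s) t = 0) (a : Ω) (l : List Ω) :
    ∑ i ∈ Finset.range ((a :: l).length + 1), f ((a :: l).take i) ((a :: l).drop i) =
      f [] (a :: l) + f [a] l := by
  have htail : ∀ i ∈ Finset.range l.length,
      f ((a :: l).take (i + 1 + 1)) ((a :: l).drop (i + 1 + 1)) = 0 := by
    intro i hi
    cases l with
    | nil => simp at hi
    | cons b l => exact hf a b _ _
  rw [List.length_cons, Finset.sum_range_succ', Finset.sum_range_succ',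
    Finset.sum_eq_zero htail, zero_add, add_comm]
  rfl

theorem mono_nil [DecidableEq Ω] [One K] [Zero K] : (mono [] : List Ω → K) = mone := by
  funext w
  cases w <;> simp [mono, mone]

theorem letterCoproduct_cons_cons_left [Add Ω] [DecidableEq Ω] [Zero K] [One K] (ω a b : Ω)
    (u v : List Ω) : letterCoproduct ω (a :: b :: u, v) = (0 : K) := by
  simp only [letterCoproduct]

theorem letterCoproduct_cons_cons_right [Add Ω] [DecidableEq Ω] [Zero K] [One K] (ω a b : Ω)
    (u v : List Ω) : letterCoproduct ω (u, a :: b :: v) = (0 : K) := by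
  rcases u with _ | ⟨c, _ | _⟩ <;> simp only [letterCoproduct]

section LetterProducts

variable [DecidableEq Ω] [CommRing K]

theorem sprod_mono_singleton_nil (ω : Ω) (Q : List Ω → K) : sprod (mono [ω]) Q [] = 0 := by
  simp [sprod, mono]

theorem sprod_mono_singleton_cons (ω a : Ω) (Q : List Ω → K) (w : List Ω) :
    sprod (mono [ω]) Q (a :: w) = if a = ω then Q w else 0 := by
  rw [sprod, sum_take_drop_cons_of_cons_cons_eq_zero (fun s t => mono [ω] s * Q t) (by simp [mono])]
  simp [mono]

theorem mono_cons (a : Ω) (w : List Ω) :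
    (mono (a :: w) : List Ω → K) = sprod (mono [a]) (mono w) := by
  funext x
  cases x with
  | nil => simp [sprod_mono_singleton_nil, mono]
  | cons b x => simp [sprod_mono_singleton_cons, mono, ite_and]

variable [Add Ω]

theorem tprod_letterCoproduct_nil_nil (ω : Ω) (Q : List Ω × List Ω → K) :
    tprod (letterCoproduct ω) Q ([], []) = 0 := by
  simp [tprod, letterCoproduct]

theorem tprod_letterCoproduct_cons_nil (ω a : Ω) (u : List Ω) (Q : List Ω × List Ω → K) :
    tprod (letterCoproduct ω) Q (a :: u, []) = if a = ω then Q (u, []) else 0 := by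
  have hsum := sum_take_drop_cons_of_cons_cons_eq_zero
    (fun s t => letterCoproduct ω (s, []) * Q (t, []))
    (by simp [letterCoproduct_cons_cons_left]) a u
  simpa [tprod, letterCoproduct] using hsum

theorem tprod_letterCoproduct_nil_cons (ω b : Ω) (v : List Ω) (Q : List Ω × List Ω → K) :
    tprod (letterCoproduct ω) Q ([], b :: v) = if b = ω then Q ([], v) else 0 := by
  have hsum := sum_take_drop_cons_of_cons_cons_eq_zero
    (fun s t => letterCoproduct ω ([], s) * Q ([], t))
    (by simp [letterCoproduct_cons_cons_right]) b v
  simpa [tprod, letterCoproduct] using hsum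

theorem tprod_letterCoproduct_cons_cons (ω a b : Ω) (u v : List Ω) (Q : List Ω × List Ω → K) :
    tprod (letterCoproduct ω) Q (a :: u, b :: v) =
      (if a = ω then Q (u, b :: v) else 0) + (if b = ω then Q (a :: u, v) else 0) +
        (if a + b = ω then Q (u, v) else 0) := by
  have hinner (s t : List Ω) := sum_take_drop_cons_of_cons_cons_eq_zero
    (fun s' t' => letterCoproduct ω (s, s') * Q (t, t'))
    (by simp [letterCoproduct_cons_cons_right]) b v
  simp only [tprod, hinner]
  rw [sum_take_drop_cons_of_cons_cons_eq_zero
    (fun s t => letterCoproduct ω (s, []) * Q (t, b :: v) + letterCoproduct ω (s, [b]) * Q (t, v))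
    (by simp [letterCoproduct_cons_cons_left])]
  simp only [letterCoproduct, ite_mul, one_mul, zero_mul, zero_add]
  abel

theorem tprod_letterCoproduct_cshuffleCoproduct (ω : Ω) (Q : List Ω → K) :
    tprod (letterCoproduct ω) (cshuffleCoproduct Q) =
      cshuffleCoproduct (sprod (mono [ω]) Q) := by
  funext ⟨u, v⟩
  rcases u with _ | ⟨a, u⟩ <;> rcases v with _ | ⟨b, v⟩
  · simp only [tprod_letterCoproduct_nil_nil, cshuffleCoproduct, cshuffleSum_nil_left,
      sprod_mono_singleton_nil]
  · simp only [tprod_letterCoproduct_nil_cons, cshuffleCoproduct, cshuffleSum_nil_left,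
      sprod_mono_singleton_cons]
  · simp only [tprod_letterCoproduct_cons_nil, cshuffleCoproduct, cshuffleSum_nil_right,
      sprod_mono_singleton_cons]
  · simp only [tprod_letterCoproduct_cons_cons, cshuffleCoproduct, cshuffleSum_cons_cons,
      sprod_mono_singleton_cons, cshuffleSum_ite]

end LetterProducts

theorem cshuffleCoproduct_mone [Add Ω] [CommRing K] :
    cshuffleCoproduct (mone : List Ω → K) = tone := by
  funext ⟨u, v⟩
  cases u <;> cases v <;>
    simp [cshuffleCoproduct, tone, mone, cshuffleSum_nil_left, cshuffleSum_nil_right,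
      cshuffleSum_cons_cons, cshuffleSum_zero]

theorem map_mono_eq_cshuffleCoproduct [Add Ω] [DecidableEq Ω] [CommRing K]
    (Δ : (List Ω → K) → (List Ω × List Ω → K))
    (hmul : ∀ P Q : List Ω → K, Δ (sprod P Q) = tprod (Δ P) (Δ Q))
    (hone : Δ mone = tone) (hletter : ∀ ω : Ω, Δ (mono [ω]) = letterCoproduct ω) (w : List Ω) :
    Δ (mono w) = cshuffleCoproduct (mono w) := by
  induction w with
  | nil => rw [mono_nil, hone, cshuffleCoproduct_mone]
  | cons a w ih =>
    rw [mono_cons, hmul, hletter, ih, tprod_letterCoproduct_cshuffleCoproduct]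

theorem map_mono_apply_eq_count_cshuffles [Add Ω] [DecidableEq Ω] [CommRing K]
    (Δ : (List Ω → K) → (List Ω × List Ω → K))
    (hmul : ∀ P Q : List Ω → K, Δ (sprod P Q) = tprod (Δ P) (Δ Q))
    (hone : Δ mone = tone) (hletter : ∀ ω : Ω, Δ (mono [ω]) = letterCoproduct ω)
    (u v w : List Ω) :
    Δ (mono w) (u, v) = ((cshuffles u v).count w : K) := by
  rw [map_mono_eq_cshuffleCoproduct Δ hmul hone hletter, cshuffleCoproduct, cshuffleSum_mono]

theorem coeff_of_coproductStar_ne_zero_iff_mem_contracting_shuffles_general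
    [Add Ω] [DecidableEq Ω] [CommRing K] [CharZero K]
    (Δ : (List Ω → K) → (List Ω × List Ω → K))
    (hmul : ∀ P Q : List Ω → K, Δ (sprod P Q) = tprod (Δ P) (Δ Q))
    (hone : Δ mone = tone) (hletter : ∀ ω : Ω, Δ (mono [ω]) = letterCoproduct ω)
    (u v w : List Ω) :
    Δ (mono w) (u, v) ≠ 0 ↔ w ∈ cshuffles u v := by
  rw [map_mono_apply_eq_count_cshuffles Δ hmul hone hletter, Nat.cast_ne_zero,
    Multiset.count_ne_zero]

theorem coeff_of_coproductStar_ne_zero_iff_mem_contracting_shuffles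
    [AddCommSemigroup Ω] [DecidableEq Ω] [Field K] [CharZero K]
    (hfin : ∀ ω : Ω, {p : Ω × Ω | p.1 + p.2 = ω}.Finite)
    (Δ : (List Ω → K) → (List Ω × List Ω → K))
    (hmul : ∀ P Q : List Ω → K, Δ (sprod P Q) = tprod (Δ P) (Δ Q))
    (hone : Δ mone = tone)
    (hletter : ∀ ω : Ω, Δ (mono [ω]) =
      fun p => mono [ω] p.1 * mone p.2 + mone p.1 * mono [ω] p.2 +
        (match p with
          | ([α], [β]) => if α + β = ω then (1 : K) else 0
          | _ => 0))
    (u v w : List Ω) :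
    Δ (mono w) (u, v) ≠ 0 ↔ w ∈ cshuffles u v := by
  have hletter' (ω : Ω) : Δ (mono [ω]) = letterCoproduct ω := by
    rw [hletter]
    funext ⟨x, y⟩
    rcases x with _ | ⟨a, _ | ⟨a', x⟩⟩ <;> rcases y with _ | ⟨b, _ | ⟨b', y⟩⟩ <;>
      simp [letterCoproduct, mono, mone]
  exact coeff_of_coproductStar_ne_zero_iff_mem_contracting_shuffles_general
    Δ hmul hone hletter' u v w

end Moulds
end

section
/- Let K be a field and Ω ⊆ K an additive sub-semigroup of K with 0 ∉ Ω. The mould S defined by S^∅ = 1 and S^{(ω_1,…,ω_r)} = (−1)^r / (ω_1(ω_1+ω_2)⋯(ω_1+⋯+ω_r)) for r ≥ 1 (all partial sums ω_1+⋯+ω_i lie in Ω, hence are nonzero) is symétral: Σ_{w∈sh(u,v)} S^w = S^u · S^v for all words u, v. -/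
namespace Moulds

/- STATEMENT 8: Let K be a field and Ω ⊆ K an additive sub-semigroup with 0 ∉ Ω.
The mould S with S^∅ = 1 and
S^{(ω₁,…,ω_r)} = (−1)^r / (ω₁(ω₁+ω₂)⋯(ω₁+⋯+ω_r)) is symétral on words with
letters in Ω. -/

variable {K : Type*} [Field K]

/-- The mould S^{(ω₁,…,ω_r)} = (−1)^r / ∏_{i=1}^r (ω₁+⋯+ω_i); for r = 0 this
gives S^∅ = 1. -/
def Smould (K : Type*) [Field K] : List K → K :=
  fun w => (-1) ^ w.length /
    ((List.range w.length).map (fun i => (w.take (i + 1)).sum)).prod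

/-!
A shuffle of `u ++ [a]` and `v ++ [b]` ends in `a` or in `b`. Write `s` and `t` for the sums of
these two words. Every shuffle of them has sum `s + t`, so its last letter, whichever it is,
contributes the factor `-1 / (s + t)` to the mould. By induction on both words the claim then
reduces to `(1 / s + 1 / t) / (s + t) = 1 / (s * t)`.
-/

section Shuffles

variable {X A : Type*}

@[simp]
theorem shuffles_nil_left (v : List X) : shuffles [] v = {v} := by
  rw [shuffles]

@[simp]
theorem shuffles_nil_right (u : List X) : shuffles u [] = {u} := by
  cases u <;> rw [shuffles]

theorem shuffles_cons_cons (a b : X) (u v : List X) :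
    shuffles (a :: u) (b :: v) =
      (shuffles u (b :: v)).map (a :: ·) + (shuffles (a :: u) v).map (b :: ·) := by
  rw [shuffles]

theorem shuffles_concat_concat (u v : List X) (a b : X) :
    shuffles (u ++ [a]) (v ++ [b]) =
      (shuffles u (v ++ [b])).map (· ++ [a]) + (shuffles (u ++ [a]) v).map (· ++ [b]) := by
  induction u generalizing v with
  | nil =>
    induction v with
    | nil => simp [shuffles_cons_cons, add_comm]
    | cons d v ihv =>
      simp_all only [List.nil_append, List.cons_append, shuffles_nil_left, shuffles_cons_cons,
        Multiset.map_add, Multiset.map_singleton, Multiset.map_map, Function.comp_def]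
      abel
  | cons c u ihu =>
    induction v with
    | nil =>
      have drop_head := ihu []
      simp_all only [List.nil_append, List.cons_append, shuffles_nil_right, shuffles_cons_cons,
        Multiset.map_add, Multiset.map_singleton, Multiset.map_map, Function.comp_def]
      abel
    | cons d v ihv =>
      have drop_head := ihu (d :: v)
      simp_all only [List.cons_append, shuffles_cons_cons, Multiset.map_add, Multiset.map_map,
        Function.comp_def]
      abel

theorem perm_append_of_mem_shuffles {u v w : List X} (hw : w ∈ shuffles u v) :
    w.Perm (u ++ v) := by
  induction u, v using shuffles.induct generalizing w with
  | case1 v => simp_all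
  | case2 a u => simp_all
  | case3 a u b v ihu ihv =>
    rw [shuffles_cons_cons, Multiset.mem_add, Multiset.mem_map, Multiset.mem_map] at hw
    obtain ⟨w, hw, rfl⟩ | ⟨w, hw, rfl⟩ := hw
    · exact (ihu hw).cons a
    · exact ((ihv hw).cons b).trans List.perm_middle.symm

theorem sum_eq_of_mem_shuffles [AddCommMonoid X] {u v w : List X} (hw : w ∈ shuffles u v) :
    w.sum = u.sum + v.sum := by
  rw [(perm_append_of_mem_shuffles hw).sum_eq, List.sum_append]

@[simp]
theorem shuffleSum_nil_left [AddCommMonoid A] (M : List X → A) (v : List X) :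
    shuffleSum M [] v = M v := by
  simp [shuffleSum]

@[simp]
theorem shuffleSum_nil_right [AddCommMonoid A] (M : List X → A) (u : List X) :
    shuffleSum M u [] = M u := by
  simp [shuffleSum]

theorem shuffleSum_concat_concat [AddCommMonoid A] (M : List X → A) (u v : List X) (a b : X) :
    shuffleSum M (u ++ [a]) (v ++ [b]) =
      shuffleSum (fun w => M (w ++ [a])) u (v ++ [b]) +
        shuffleSum (fun w => M (w ++ [b])) (u ++ [a]) v := by
  simp only [shuffleSum, shuffles_concat_concat, Multiset.map_add, Multiset.sum_add,
    Multiset.map_map, Function.comp_def]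

end Shuffles

@[simp]
theorem Smould_nil : Smould K [] = 1 := by
  simp [Smould]

theorem Smould_concat (w : List K) (a : K) :
    Smould K (w ++ [a]) = -Smould K w / (w.sum + a) := by
  have take_concat : (List.range w.length).map (fun i => ((w ++ [a]).take (i + 1)).sum) =
      (List.range w.length).map (fun i => (w.take (i + 1)).sum) :=
    List.map_congr_left fun i hi => by
      rw [List.take_append_of_le_length (List.mem_range.mp hi)]
  have take_all : ((w ++ [a]).take (w.length + 1)).sum = w.sum + a := by
    rw [List.take_of_length_le (by simp), List.sum_append, List.sum_singleton]
  simp only [Smould, List.length_append, List.length_singleton, List.range_succ, List.map_append,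
    List.map_singleton, List.prod_append, List.prod_singleton, take_concat, take_all,
    pow_succ, mul_neg_one, div_mul_eq_div_div, neg_div]

theorem shuffleSum_Smould_concat (u v : List K) (a : K) :
    shuffleSum (fun w => Smould K (w ++ [a])) u v =
      -shuffleSum (Smould K) u v / (u.sum + v.sum + a) := by
  have last_factor : ∀ w ∈ shuffles u v,
      Smould K (w ++ [a]) = Smould K w * (-1 / (u.sum + v.sum + a)) := fun w hw => by
    rw [Smould_concat, sum_eq_of_mem_shuffles hw]
    ring
  rw [shuffleSum, Multiset.map_congr rfl last_factor, Multiset.sum_map_mul_right, ← shuffleSum]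
  ring

theorem shuffleSum_Smould_concat_concat (u v : List K) (a b : K) :
    shuffleSum (Smould K) (u ++ [a]) (v ++ [b]) =
      -(shuffleSum (Smould K) u (v ++ [b]) + shuffleSum (Smould K) (u ++ [a]) v) /
        ((u.sum + a) + (v.sum + b)) := by
  simp only [shuffleSum_concat_concat, shuffleSum_Smould_concat, List.sum_append,
    List.sum_singleton]
  ring

theorem Smould_symetral_general (u v : List K)
    (hsum : ∀ p q : List K, p <+: u → q <+: v → p ++ q ≠ [] → (p ++ q).sum ≠ 0) :
    shuffleSum (Smould K) u v = Smould K u * Smould K v := by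
  induction u using List.reverseRecOn generalizing v with
  | nil => simp
  | append_singleton u a ihu =>
    induction v using List.reverseRecOn with
    | nil => simp
    | append_singleton v b ihv =>
      have drop_left : shuffleSum (Smould K) u (v ++ [b]) = Smould K u * Smould K (v ++ [b]) :=
        ihu _ fun p q hp hq => hsum p q (hp.trans (List.prefix_append u [a])) hq
      have drop_right : shuffleSum (Smould K) (u ++ [a]) v = Smould K (u ++ [a]) * Smould K v :=
        ihv fun p q hp hq => hsum p q hp (hq.trans (List.prefix_append v [b]))
      have hs : u.sum + a ≠ 0 := by
        simpa using hsum (u ++ [a]) [] List.prefix_rfl List.nil_prefix (by simp)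
      have ht : v.sum + b ≠ 0 := by
        simpa using hsum [] (v ++ [b]) List.nil_prefix List.prefix_rfl (by simp)
      have hst : (u.sum + a) + (v.sum + b) ≠ 0 := by
        simpa [add_assoc] using hsum (u ++ [a]) (v ++ [b]) List.prefix_rfl List.prefix_rfl (by simp)
      rw [shuffleSum_Smould_concat_concat, drop_left, drop_right, Smould_concat, Smould_concat]
      field_simp
      ring

theorem Smould_symetral (Ω : Set K)
    (hadd : ∀ a ∈ Ω, ∀ b ∈ Ω, a + b ∈ Ω) (h0 : (0 : K) ∉ Ω) :
    Smould K [] = 1 ∧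
      ∀ u v : List K, (∀ x ∈ u, x ∈ Ω) → (∀ x ∈ v, x ∈ Ω) →
        shuffleSum (Smould K) u v = Smould K u * Smould K v := by
  refine ⟨Smould_nil, fun u v hu hv => Smould_symetral_general u v fun p q hp hq hne => ?_⟩
  refine ne_of_mem_of_not_mem (List.sum_induction_nonempty (· ∈ Ω) ?_ hne ?_) h0
  · exact fun {a b} ha hb => hadd a ha b hb
  · exact fun x hx => (List.mem_append.mp hx).elim (hu x <| hp.subset ·) (hv x <| hq.subset ·)

end Moulds
end

section
/- Let K be a field and Ω a commutative semigroup. A mould M on Ω possesses a two-sided inverse for mould composition if and only if M^∅ = 0 and M^{(ω)} ≠ 0 for every one-letter word (ω), ω ∈ Ω; consequently the set of moulds satisfying these two conditions is a group under mould composition, with neutral element I^•. -/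
namespace Moulds

/- STATEMENT 12: Over a field K and a commutative semigroup Ω, a mould M has a
two-sided inverse for mould composition iff M^∅ = 0 and M^{(ω)} ≠ 0 for every
one-letter word; consequently these moulds form a group under composition with
neutral element I^• (closure, neutrality and associativity on this set are
recorded alongside). -/

variable {Ω : Type*} [AddCommSemigroup Ω] {K : Type*} [Field K]

/-- The conditions cutting out the composition group. -/
def CompInvertible (M : List Ω → K) : Prop :=
  M [] = 0 ∧ ∀ ω : Ω, M [ω] ≠ 0

/-!
Concatenating its blocks turns a list of blocks into a word `w`, and the lists with value `w` are
the factorizations of `w`. In both `(A ∘ B) ∘ C` and `A ∘ (B ∘ C)` the coefficient at `w` is a sum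
over lists of blocks of blocks whose twofold concatenation is `w`; only the order of the two
concatenations differs, so associativity of `∘` is associativity of concatenation.

Every factorization of `w = (ω₁, …, ω_r)` other than the one into letters has fewer than `r` blocks.
Hence `(N ∘ M)^w` is `N^w M^{(ω₁)} ⋯ M^{(ω_r)}` plus terms in the values of `N` on shorter words,
and `N ∘ M = I^•` can be solved for `N` by recursion on length. An associative product with a left
identity and left inverses is a group law, so `N` is also a right inverse.
-/

section Choices

variable {ι X : Type*}

/-- Nonempty words, encoded as in `splits` by their first letter and the list of the others. -/
abbrev Block (X : Type*) := X × List X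

/-- The nonempty word represented by a block. -/
def blockWord (b : Block X) : List X := b.1 :: b.2

theorem blockWord_injective : Function.Injective (blockWord (X := X)) :=
  fun _ _ h => Prod.ext (List.cons.inj h).1 (List.cons.inj h).2

/-- The lists obtained by choosing, for each entry `i` of a list, an element of `s i`; this is the
analogue for lists of `Fintype.piFinset`. -/
def choices (s : ι → Finset X) : List ι → Finset (List X)
  | [] => {[]}
  | i :: l => (s i ×ˢ choices s l).map ⟨blockWord, blockWord_injective⟩

theorem mem_choices {s : ι → Finset X} {l : List ι} {r : List X} :
    r ∈ choices s l ↔ List.Forall₂ (fun c i => c ∈ s i) r l := by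
  induction l generalizing r with
  | nil => simp [choices]
  | cons i l ih => cases r <;> simp [choices, ih, blockWord]

theorem prod_map_sum_eq_sum_choices {R : Type*} [Semiring R] (s : ι → Finset X) (g : X → R)
    (l : List ι) :
    (l.map fun i => ∑ c ∈ s i, g c).prod = ∑ r ∈ choices s l, (r.map g).prod := by
  induction l with
  | nil => simp [choices]
  | cons i l ih => simp [choices, ih, Finset.sum_mul_sum, Finset.sum_product, blockWord]

end Choices

section Factorizations

variable {X Y : Type*}

/-- The block obtained by applying `f` to each letter of a block. -/
def blockMap (f : X → Y) : Block X → Block Y := Prod.map f (List.map f)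

/-- The block obtained by concatenating a block of blocks. -/
def blockJoin (h : Block (Block X)) : Block X :=
  (h.1.1, h.1.2 ++ h.2.flatMap blockWord)

/-- The factorization of a word into its one-letter blocks. -/
def letters (w : List X) : List (Block X) := w.map fun a => (a, [])

/-- The ways to put a letter in front of a factorization: into its first block, or as a block of
its own. This is the recursion step of `splits`. -/
def consFactorization (a : X) : List (Block X) → List (List (Block X))
  | [] => [[(a, [])]]
  | (b, u) :: p => [(a, b :: u) :: p, (a, []) :: (b, u) :: p]

theorem blockWord_blockMap (f : X → Y) (b : Block X) :
    blockWord (blockMap f b) = (blockWord b).map f := rfl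

theorem blockWord_blockJoin (h : Block (Block X)) :
    blockWord (blockJoin h) = (blockWord h).flatMap blockWord := by
  simp [blockJoin, blockWord]

theorem flatMap_map_blockJoin (r : List (Block (Block X))) :
    (r.map blockJoin).flatMap blockWord = (r.flatMap blockWord).flatMap blockWord := by
  simp only [List.flatMap_map, List.flatMap_assoc, blockWord_blockJoin]

theorem splits_cons (a : X) (t : List X) :
    splits (a :: t) = (splits t).flatMap (consFactorization a) := rfl

theorem flatMap_blockWord_eq_cons_iff {a : X} {t : List X} {p : List (Block X)} :
    p.flatMap blockWord = a :: t ↔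
      ∃ q, q.flatMap blockWord = t ∧ p ∈ consFactorization a q := by
  constructor
  · intro hp
    match p with
    | [] => simp at hp
    | (x, []) :: q =>
      obtain ⟨rfl, rfl⟩ : x = a ∧ q.flatMap blockWord = t := by simpa [blockWord] using hp
      exact ⟨q, rfl, by cases q <;> simp [consFactorization]⟩
    | (x, b :: u) :: q =>
      obtain ⟨rfl, rfl⟩ : x = a ∧ ((b, u) :: q).flatMap blockWord = t := by
        simpa [blockWord] using hp
      exact ⟨(b, u) :: q, rfl, by simp [consFactorization]⟩
  · rintro ⟨_ | ⟨⟨b, u⟩, q⟩, rfl, hp⟩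
    · obtain rfl : p = [(a, [])] := by simpa [consFactorization] using hp
      rfl
    · obtain rfl | rfl : p = (a, b :: u) :: q ∨ p = (a, []) :: (b, u) :: q := by
        simpa [consFactorization] using hp
      all_goals rfl

theorem mem_splits {w : List X} {p : List (Block X)} :
    p ∈ splits w ↔ p.flatMap blockWord = w := by
  induction w generalizing p with
  | nil => cases p <;> simp [splits, blockWord]
  | cons a t ih =>
    simp only [splits_cons, List.mem_flatMap, ih, flatMap_blockWord_eq_cons_iff]

theorem nodup_consFactorization (a : X) (p : List (Block X)) :
    (consFactorization a p).Nodup := by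
  cases p <;> simp [consFactorization]

theorem disjoint_consFactorization (a : X) {p q : List (Block X)} (h : p ≠ q) :
    (consFactorization a p).Disjoint (consFactorization a q) := by
  rcases p with _ | ⟨⟨b, u⟩, p⟩ <;> rcases q with _ | ⟨⟨c, v⟩, q⟩ <;>
    grind [consFactorization, List.Disjoint]

theorem nodup_splits (w : List X) : (splits w).Nodup := by
  induction w with
  | nil => simp [splits]
  | cons a t ih =>
    rw [splits_cons, List.nodup_flatMap]
    exact ⟨fun p _ => nodup_consFactorization a p, ih.imp (disjoint_consFactorization a)⟩

theorem map_consFactorization (f : X → Y) (a : X) (p : List (Block X)) :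
    (consFactorization a p).map (List.map (blockMap f)) =
      consFactorization (f a) (p.map (blockMap f)) := by
  cases p <;> rfl

theorem splits_map (f : X → Y) (w : List X) :
    splits (w.map f) = (splits w).map (List.map (blockMap f)) := by
  induction w with
  | nil => rfl
  | cons a t ih =>
    simp only [List.map_cons, splits_cons, ih, List.flatMap_map, List.map_flatMap,
      map_consFactorization]

/-- The finite set of factorizations of a word into nonempty blocks. -/
def factorizations (w : List X) : Finset (List (Block X)) := ⟨splits w, nodup_splits w⟩

theorem mem_factorizations {w : List X} {p : List (Block X)} :
    p ∈ factorizations w ↔ p.flatMap blockWord = w :=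
  mem_splits

theorem sum_factorizations_map {R : Type*} [AddCommMonoid R] (f : X → Y) (w : List X)
    (Φ : List (Block Y) → R) :
    ∑ p ∈ factorizations (w.map f), Φ p = ∑ p ∈ factorizations w, Φ (p.map (blockMap f)) := by
  simp [factorizations, Finset.sum, splits_map, Function.comp_def]

theorem letters_mem_factorizations (w : List X) : letters w ∈ factorizations w := by
  simp [mem_factorizations, letters, List.flatMap_map, blockWord]

theorem map_blockWord_letters (N : List X → Y) (w : List X) :
    ((letters w).map fun b => N (blockWord b)) = w.map fun a => N [a] := by
  simp [letters, blockWord, Function.comp_def]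

theorem letters_flatMap_blockWord {p : List (Block X)} (hp : ∀ b ∈ p, b.2 = []) :
    letters (p.flatMap blockWord) = p := by
  induction p with
  | nil => rfl
  | cons b p ih =>
    obtain ⟨hb, hp⟩ := List.forall_mem_cons.1 hp
    rw [List.flatMap_cons, letters, List.map_append, ← letters, ← letters, ih hp]
    simp [letters, blockWord, ← hb]

theorem exists_ne_nil_of_ne_letters {w : List X} {p : List (Block X)}
    (hp : p ∈ factorizations w) (hne : p ≠ letters w) : ∃ b ∈ p, b.2 ≠ [] := by
  by_contra! h
  exact hne (by rw [← letters_flatMap_blockWord h, mem_factorizations.1 hp])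

theorem length_lt_of_ne_letters {w : List X} {p : List (Block X)}
    (hp : p ∈ factorizations w) (hne : p ≠ letters w) : p.length < w.length := by
  obtain ⟨b, hb, hb'⟩ := exists_ne_nil_of_ne_letters hp hne
  calc p.length = (p.map fun _ => 1).sum := by simp
    _ < (p.map fun b => (blockWord b).length).sum :=
        List.sum_lt_sum _ _ (fun b _ => by simp [blockWord])
          ⟨b, hb, by simpa [blockWord, List.length_pos_iff] using hb'⟩
    _ = w.length := by rw [← List.length_flatMap, mem_factorizations.1 hp]

/-- The factorizations of the word of a block, recorded as blocks of blocks. -/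
noncomputable def blockFactorizations (b : Block X) : Finset (Block (Block X)) :=
  (factorizations (blockWord b)).preimage blockWord blockWord_injective.injOn

theorem mem_blockFactorizations {b : Block X} {h : Block (Block X)} :
    h ∈ blockFactorizations b ↔ blockJoin h = b := by
  rw [blockFactorizations, Finset.mem_preimage, mem_factorizations, ← blockWord_blockJoin,
    blockWord_injective.eq_iff]

theorem sum_blockFactorizations {R : Type*} [AddCommMonoid R] (b : Block X)
    (Φ : List (Block X) → R) :
    ∑ h ∈ blockFactorizations b, Φ (blockWord h) = ∑ q ∈ factorizations (blockWord b), Φ q := by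
  refine Finset.sum_preimage _ _ _ _ fun q hq hq' => ?_
  cases q with
  | nil => simp [mem_factorizations, blockWord] at hq
  | cons c q => exact absurd ⟨(c, q), rfl⟩ hq'

theorem mem_choices_blockFactorizations {p : List (Block X)} {r : List (Block (Block X))} :
    r ∈ choices blockFactorizations p ↔ r.map blockJoin = p := by
  simp only [mem_choices, mem_blockFactorizations]
  rw [← List.forall₂_map_left_iff, List.forall₂_eq_eq_eq]

theorem sum_factorizations_factorizations {R : Type*} [AddCommMonoid R] (w : List X)
    (Φ : List (Block (Block X)) → R) :
    ∑ q ∈ factorizations w, ∑ r ∈ factorizations q, Φ r =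
      ∑ p ∈ factorizations w, ∑ r ∈ choices blockFactorizations p, Φ r := by
  rw [Finset.sum_sigma', Finset.sum_sigma']
  refine Finset.sum_nbij' (fun x => ⟨x.2.map blockJoin, x.2⟩)
    (fun x => ⟨x.2.flatMap blockWord, x.2⟩) ?_ ?_ ?_ ?_ fun _ _ => rfl
  all_goals
    rintro ⟨q, r⟩ hqr
    simp only [Finset.mem_sigma, mem_factorizations, mem_choices_blockFactorizations] at hqr ⊢
    obtain ⟨rfl, rfl⟩ := hqr
    simp [flatMap_map_blockJoin]

end Factorizations

section Composition

variable {X R : Type*} [CommRing R]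

theorem mcomp_apply [Add X] (M N : List X → R) (w : List X) :
    mcomp M N w =
      ∑ p ∈ factorizations w, M (p.map blockSum) * (p.map fun b => N (blockWord b)).prod := rfl

theorem mcomp_nil [Add X] (M N : List X → R) : mcomp M N [] = M [] := by
  simp [mcomp, splits]

theorem mcomp_singleton [Add X] (M N : List X → R) (a : X) :
    mcomp M N [a] = M [a] * N [a] := by
  simp [mcomp, splits, blockSum]

theorem map_blockSum_letters [Add X] (w : List X) : (letters w).map blockSum = w := by
  simp [letters, blockSum, Function.comp_def]

theorem mcomp_mId [Add X] (M : List X → R) : mcomp M mId = M := by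
  funext w
  rw [mcomp_apply, Finset.sum_eq_single_of_mem _ (letters_mem_factorizations w),
    map_blockSum_letters, map_blockWord_letters]
  · simp [mId]
  · intro p hp hne
    obtain ⟨b, hb, hb'⟩ := exists_ne_nil_of_ne_letters hp hne
    refine mul_eq_zero_of_right _ (List.prod_eq_zero (List.mem_map.2 ⟨b, hb, ?_⟩))
    exact if_neg (by simpa [blockWord] using hb')

theorem mId_mcomp [Add X] {M : List X → R} (hM : M [] = 0) : mcomp mId M = M := by
  funext w
  cases w with
  | nil => rw [mcomp_nil, hM]; rfl
  | cons a t =>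
    rw [mcomp_apply, Finset.sum_eq_single_of_mem [(a, t)]]
    · simp [mId, blockWord]
    · simp [mem_factorizations, blockWord]
    · intro p hp hne
      have hlen : p.length ≠ 1 := by
        rw [Ne, List.length_eq_one_iff]
        rintro ⟨b, rfl⟩
        rw [mem_factorizations, List.flatMap_singleton] at hp
        exact hne (congrArg (fun c => [c]) (blockWord_injective (a₂ := (a, t)) hp))
      simp [mId, hlen]

theorem blockSum_blockMap_blockSum [AddSemigroup X] (h : Block (Block X)) :
    blockSum (blockMap blockSum h) = blockSum (blockJoin h) := by
  obtain ⟨⟨a, u⟩, l⟩ := h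
  simp only [blockSum, blockMap, blockJoin, Prod.map, List.foldl_append]
  generalize u.foldl (· + ·) a = x
  induction l generalizing x with
  | nil => rfl
  | cons b l ih =>
    simp only [List.map_cons, List.foldl_cons, List.flatMap_cons, List.foldl_append, blockWord,
      ih, blockSum, List.foldl_assoc]

/-- The contribution of a list of blocks of blocks to the triple composition of `A`, `B`, `C`: the
mould `A` is evaluated at the sums of the outer blocks, `B` at the words of sums of inner blocks,
and `C` at the inner blocks. -/
def nestedTerm [Add X] (A B C : List X → R) (r : List (Block (Block X))) : R :=
  A (r.map fun h => blockSum (blockJoin h)) *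
    (r.map fun h => B ((blockWord h).map blockSum) *
      ((blockWord h).map fun b => C (blockWord b)).prod).prod

theorem mcomp_mcomp_left_apply [AddSemigroup X] (A B C : List X → R) (w : List X) :
    mcomp (mcomp A B) C w =
      ∑ q ∈ factorizations w, ∑ r ∈ factorizations q, nestedTerm A B C r := by
  rw [mcomp_apply]
  refine Finset.sum_congr rfl fun q _ => ?_
  rw [mcomp_apply, sum_factorizations_map, Finset.sum_mul]
  refine Finset.sum_congr rfl fun r hr => ?_
  have hC : (q.map fun b => C (blockWord b)).prod =
      (r.map fun h => ((blockWord h).map fun b => C (blockWord b)).prod).prod := by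
    rw [← mem_factorizations.1 hr, List.map_flatMap, List.flatMap_def, List.prod_flatten,
      List.map_map]
    rfl
  simp only [nestedTerm, hC, List.prod_map_mul, List.map_map, Function.comp_def,
    blockSum_blockMap_blockSum, blockWord_blockMap, mul_assoc]

theorem mcomp_mcomp_right_apply [Add X] (A B C : List X → R) (w : List X) :
    mcomp A (mcomp B C) w =
      ∑ p ∈ factorizations w, ∑ r ∈ choices blockFactorizations p, nestedTerm A B C r := by
  rw [mcomp_apply]
  refine Finset.sum_congr rfl fun p _ => ?_
  simp only [mcomp_apply, ← sum_blockFactorizations]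
  rw [prod_map_sum_eq_sum_choices, Finset.mul_sum]
  refine Finset.sum_congr rfl fun r hr => ?_
  rw [← mem_choices_blockFactorizations.1 hr, List.map_map]
  rfl

theorem mcomp_assoc [AddSemigroup X] (A B C : List X → R) :
    mcomp (mcomp A B) C = mcomp A (mcomp B C) := by
  funext w
  rw [mcomp_mcomp_left_apply, mcomp_mcomp_right_apply, sum_factorizations_factorizations]

end Composition

section Group

variable {X R : Type*} [CommRing R]

/-- The moulds that are invertible for composition: the form that `CompInvertible` takes over a
commutative ring. -/
def IsCompUnit (M : List X → R) : Prop :=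
  M [] = 0 ∧ ∀ a : X, IsUnit (M [a])

theorem isCompUnit_mId : IsCompUnit (mId : List X → R) := by
  simp [IsCompUnit, mId]

theorem IsCompUnit.mcomp [Add X] {M N : List X → R} (hM : IsCompUnit M) (hN : IsCompUnit N) :
    IsCompUnit (mcomp M N) :=
  ⟨by rw [mcomp_nil, hM.1], fun a => by rw [mcomp_singleton]; exact (hM.2 a).mul (hN.2 a)⟩

theorem IsCompUnit.of_mcomp_eq_mId [Add X] {M N : List X → R} (h : Moulds.mcomp M N = mId) :
    IsCompUnit M := by
  refine ⟨?_, fun a => IsUnit.of_mul_eq_one (N [a]) ?_⟩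
  · rw [← mcomp_nil M N, h]
    rfl
  · rw [← mcomp_singleton, h]
    rfl

open scoped Classical in
/-- The left inverse of a mould for composition, obtained by solving `(N ∘ M)^w = (I^•)^w` for
`N^w`, the coefficient of the factorization of `w` into letters. It is meaningful only if every
`M^{(ω)}` is a unit, since `Ring.inverse` is `0` elsewhere. -/
noncomputable def compLeftInv [Add X] (M : List X → R) (w : List X) : R :=
  (mId w - ∑ p : (factorizations w).erase (letters w),
      compLeftInv M (p.1.map blockSum) * (p.1.map fun b => M (blockWord b)).prod) *
    Ring.inverse (w.map fun a => M [a]).prod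
termination_by w.length
decreasing_by
  obtain ⟨hne, hp⟩ := Finset.mem_erase.1 p.2
  simpa using length_lt_of_ne_letters hp hne

theorem compLeftInv_mcomp [Add X] {M : List X → R} (hM : ∀ a, IsUnit (M [a])) :
    mcomp (compLeftInv M) M = mId := by
  classical
  funext w
  have hw : IsUnit (w.map fun a => M [a]).prod :=
    List.prod_isUnit (List.forall_mem_map.2 fun a _ => hM a)
  rw [mcomp_apply, ← Finset.add_sum_erase _ _ (letters_mem_factorizations w),
    map_blockSum_letters, map_blockWord_letters, compLeftInv,
    Ring.inverse_mul_cancel_right _ _ hw,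
    ← Finset.sum_coe_sort ((factorizations w).erase (letters w))]
  exact sub_add_cancel _ _

/-- The moulds invertible for composition, bundled so as to carry the group structure given by
composition. -/
@[ext]
structure CompGroup (X R : Type*) [CommRing R] where
  mould : List X → R
  isCompUnit : IsCompUnit mould

noncomputable instance [AddSemigroup X] : Group (CompGroup X R) :=
  letI : Mul (CompGroup X R) := ⟨fun M N =>
    ⟨mcomp M.mould N.mould, M.isCompUnit.mcomp N.isCompUnit⟩⟩
  letI : One (CompGroup X R) := ⟨⟨mId, isCompUnit_mId⟩⟩
  letI : Inv (CompGroup X R) := ⟨fun M =>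
    ⟨compLeftInv M.mould, .of_mcomp_eq_mId (compLeftInv_mcomp M.isCompUnit.2)⟩⟩
  Group.ofLeftAxioms
    (fun A B C => CompGroup.ext (mcomp_assoc A.mould B.mould C.mould))
    (fun M => CompGroup.ext (mId_mcomp M.isCompUnit.1))
    (fun M => CompGroup.ext (compLeftInv_mcomp M.isCompUnit.2))

theorem IsCompUnit.mcomp_compLeftInv [AddSemigroup X] {M : List X → R} (hM : IsCompUnit M) :
    Moulds.mcomp M (compLeftInv M) = mId :=
  congrArg CompGroup.mould (mul_inv_cancel (⟨M, hM⟩ : CompGroup X R))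

theorem exists_mcomp_inverse_iff [AddSemigroup X] {M : List X → R} :
    (∃ N : List X → R, mcomp M N = mId ∧ mcomp N M = mId) ↔ IsCompUnit M :=
  ⟨fun ⟨_, h, _⟩ => .of_mcomp_eq_mId h,
    fun hM => ⟨compLeftInv M, hM.mcomp_compLeftInv, compLeftInv_mcomp hM.2⟩⟩

end Group

theorem mould_comp_inverse_iff_and_group_general {X R : Type*} [AddSemigroup X] [CommRing R] :
    (∀ M : List X → R,
        (∃ N : List X → R, mcomp M N = mId ∧ mcomp N M = mId) ↔ IsCompUnit M) ∧
    IsCompUnit (mId : List X → R) ∧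
    (∀ M N : List X → R, IsCompUnit M → IsCompUnit N → IsCompUnit (mcomp M N)) ∧
    (∀ M : List X → R, mcomp M mId = M ∧ (M [] = 0 → mcomp mId M = M)) ∧
    (∀ A B C : List X → R, mcomp (mcomp A B) C = mcomp A (mcomp B C)) :=
  ⟨fun _ => exists_mcomp_inverse_iff, isCompUnit_mId, fun _ _ => .mcomp,
    fun M => ⟨mcomp_mId M, mId_mcomp⟩, mcomp_assoc⟩

theorem mould_comp_inverse_iff_and_group :
    (∀ M : List Ω → K,
        (∃ N : List Ω → K, mcomp M N = mId ∧ mcomp N M = mId) ↔ CompInvertible M) ∧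
    CompInvertible (mId : List Ω → K) ∧
    (∀ M N : List Ω → K, CompInvertible M → CompInvertible N →
        CompInvertible (mcomp M N)) ∧
    (∀ M : List Ω → K, CompInvertible M → mcomp M mId = M ∧ mcomp mId M = M) ∧
    (∀ A B C : List Ω → K, CompInvertible A → CompInvertible B → CompInvertible C →
        mcomp (mcomp A B) C = mcomp A (mcomp B C)) := by
  have hiff (M : List Ω → K) : IsCompUnit M ↔ CompInvertible M := by
    simp only [IsCompUnit, CompInvertible, isUnit_iff_ne_zero]
  obtain ⟨hinv, hone, hmul, hid, hassoc⟩ :=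
    mould_comp_inverse_iff_and_group_general (X := Ω) (R := K)
  simp only [hiff] at hinv hone hmul
  exact ⟨hinv, hone, hmul, fun M hM => ⟨(hid M).1, (hid M).2 hM.1⟩, fun A B C _ _ _ => hassoc A B C⟩

end Moulds
end
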